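/- In the 4-point/2-point example, there exists a transport plan ω from (4, α, μ) to (2, β, ν) with cost I(ω) = ω_{21} + ω_{41} + ω_{12} + ω_{32} = 0 if and only if ν_1 = μ_1 + μ_3 and the four equations μ_1 α_{12} + μ_3 α_{32} = μ_2 s, μ_1 α_{14} + μ_3 α_{34} = μ_4 s, μ_2 α_{21} + μ_4 α_{41} = μ_1 r, μ_2 α_{23} + μ_4 α_{43} = μ_3 r all hold; moreover in that case the zero-cost transport plan is unique, namely ω_{11} = μ_1, ω_{31} = μ_3, ω_{22} = μ_2, ω_{42} = μ_4 and all other entries of ω equal 0. -/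

import Mathlib

/-- A classical system: a row-stochastic matrix α with strictly positive invariant
probability vector μ. -/
def IsClassicalSystem {m : ℕ} (α : Fin m → Fin m → ℝ) (μ : Fin m → ℝ) : Prop :=
  (∀ p q, 0 ≤ α p q) ∧ (∀ p, ∑ q, α p q = 1) ∧
  (∀ p, 0 < μ p) ∧ (∑ p, μ p = 1) ∧ (∀ q, ∑ p, μ p * α p q = μ q)

/-- A coupling of the probability vectors μ and ν. -/
def IsCoupling {m n : ℕ} (μ : Fin m → ℝ) (ν : Fin n → ℝ) (ω : Fin m → Fin n → ℝ) : Prop :=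
  (∀ p r, 0 ≤ ω p r) ∧ (∀ p, ∑ r, ω p r = μ p) ∧ (∀ r, ∑ p, ω p r = ν r)

/-- A transport plan from the system (m, α, μ) to the system (n, β, ν): a coupling ω
satisfying Σ_p ω_{pr} α_{pq} = Σ_s ω_{qs} (ν_r/ν_s) β_{rs} for all q, r. -/
def IsTransportPlan {m n : ℕ} (α : Fin m → Fin m → ℝ) (μ : Fin m → ℝ)
    (β : Fin n → Fin n → ℝ) (ν : Fin n → ℝ) (ω : Fin m → Fin n → ℝ) : Prop :=
  IsCoupling μ ν ω ∧
    ∀ (q : Fin m) (r : Fin n), ∑ p, ω p r * α p q = ∑ s, ω q s * (ν r / ν s * β r s)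

/-- The quadratic transport cost of a coupling ω relative to the coordinates k and l. -/
def transportCost {d m n : ℕ} (k : Fin d → Fin m → ℝ) (l : Fin d → Fin n → ℝ)
    (ω : Fin m → Fin n → ℝ) : ℝ :=
  ∑ i, ∑ p, ∑ r, ω p r * (k i p - l i r) ^ 2

/-- The Wasserstein distance from (m, α, μ) with coordinates k to (n, β, ν) with
coordinates l. -/
noncomputable def Wdist {d m n : ℕ} (α : Fin m → Fin m → ℝ) (μ : Fin m → ℝ)
    (β : Fin n → Fin n → ℝ) (ν : Fin n → ℝ)
    (k : Fin d → Fin m → ℝ) (l : Fin d → Fin n → ℝ) : ℝ :=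
  sInf {x | ∃ ω, IsTransportPlan α μ β ν ω ∧ x = Real.sqrt (transportCost k l ω)}

/-!
The cost `I` is the mass that a coupling puts off the graph of the map `π` with `π 1 = π 3 = 1` and
`π 2 = π 4 = 2`, so a zero-cost coupling is carried by the graph and is determined by its first
marginal. For this coupling the transport equations say that the flow of `μ` from each fibre of `π`
into each point `q` is prescribed. Summed over the fibres, both sides give `μ q` because `μ` and `ν`
are invariant, so for each `q` the equation for the fibre through `q` follows from the others.
-/

section GraphCoupling

variable {m n : ℕ} {α : Fin m → Fin m → ℝ} {μ : Fin m → ℝ} {β : Fin n → Fin n → ℝ}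
  {ν : Fin n → ℝ} {ω : Fin m → Fin n → ℝ}

/-- The matrix with first marginal `μ` carried by the graph of `π`: row `p` has the single possibly
nonzero entry `μ p`, in column `π p`. -/
def graphCoupling (μ : Fin m → ℝ) (π : Fin m → Fin n) : Fin m → Fin n → ℝ :=
  fun p => Pi.single (π p) (μ p)

/-- The mass of `ω` off the graph of `π`, that is, the cost of `ω` when moving `p` to `r` is free
for `r = π p` and costs one per unit of mass otherwise. -/
def offGraphMass (π : Fin m → Fin n) (ω : Fin m → Fin n → ℝ) : ℝ :=
  ∑ p, ∑ r with r ≠ π p, ω p r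

/-- The flow of `μ` in one step of `α` from the fibre of `π` over `r` into the point `q`. -/
def fiberFlow (α : Fin m → Fin m → ℝ) (μ : Fin m → ℝ) (π : Fin m → Fin n) (r : Fin n)
    (q : Fin m) : ℝ :=
  ∑ p with π p = r, μ p * α p q

variable {π : Fin m → Fin n}

lemma offGraphMass_graphCoupling : offGraphMass π (graphCoupling μ π) = 0 :=
  Finset.sum_eq_zero fun _ _ => Finset.sum_eq_zero fun _ hr =>
    Pi.single_eq_of_ne (Finset.mem_filter.mp hr).2 _

lemma offGraphMass_eq_zero_iff (hω : ∀ p r, 0 ≤ ω p r) :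
    offGraphMass π ω = 0 ↔ ∀ p r, r ≠ π p → ω p r = 0 := by
  simp [offGraphMass, Finset.sum_eq_zero_iff_of_nonneg, Finset.sum_nonneg, hω]

lemma eq_graphCoupling_of_offGraphMass_eq_zero (hω : IsCoupling μ ν ω)
    (hmass : offGraphMass π ω = 0) : ω = graphCoupling μ π := by
  obtain ⟨hnonneg, hrow, -⟩ := hω
  have hoff := (offGraphMass_eq_zero_iff hnonneg).mp hmass
  funext p r
  obtain rfl | hr := eq_or_ne r (π p)
  · rw [graphCoupling, Pi.single_eq_same, ← hrow p, Fintype.sum_eq_single _ (hoff p)]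
  · rw [graphCoupling, Pi.single_eq_of_ne hr, hoff p r hr]

lemma isCoupling_graphCoupling_iff (hμ : ∀ p, 0 ≤ μ p) :
    IsCoupling μ ν (graphCoupling μ π) ↔ ∀ r, ∑ p with π p = r, μ p = ν r := by
  have hcol (r : Fin n) : ∑ p, graphCoupling μ π p r = ∑ p with π p = r, μ p := by
    simp only [graphCoupling, Pi.single_apply, Finset.sum_filter, eq_comm]
  have hnonneg (p : Fin m) (r : Fin n) : 0 ≤ graphCoupling μ π p r :=
    (Pi.single_nonneg.mpr (hμ p) : 0 ≤ graphCoupling μ π p) r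
  have hrow (p : Fin m) : ∑ r, graphCoupling μ π p r = μ p := Fintype.sum_pi_single' _ _
  simp only [IsCoupling, hnonneg, hrow, hcol, implies_true, true_and]

lemma isTransportPlan_graphCoupling_iff (hμ : ∀ p, 0 ≤ μ p) :
    IsTransportPlan α μ β ν (graphCoupling μ π) ↔
      (∀ r, ∑ p with π p = r, μ p = ν r) ∧
        ∀ q r, fiberFlow α μ π r q = μ q * (ν r / ν (π q) * β r (π q)) := by
  simp only [IsTransportPlan, isCoupling_graphCoupling_iff hμ, fiberFlow, graphCoupling,
    Pi.single_apply, ite_mul, zero_mul, Finset.sum_ite_eq, Finset.mem_univ, if_true,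
    Finset.sum_filter, eq_comm (b := π _)]

lemma sum_fiberFlow (q : Fin m) : ∑ r, fiberFlow α μ π r q = ∑ p, μ p * α p q :=
  Finset.sum_fiberwise _ _ _

lemma sum_reversed_transition {t : Fin n} (hν : ν t ≠ 0) (hβ : ∑ r, ν r * β r t = ν t) :
    ∑ r, ν r / ν t * β r t = 1 := by
  simp only [div_mul_eq_mul_div, ← Finset.sum_div, hβ, div_self hν]

lemma forall_eq_iff_forall_ne_of_sum_eq {ι M : Type*} [Fintype ι] [AddCommMonoid M]
    [IsRightCancelAdd M] {f g : ι → M} (h : ∑ i, f i = ∑ i, g i) (a : ι) :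
    (∀ i, f i = g i) ↔ ∀ i, i ≠ a → f i = g i := by
  classical
  refine ⟨fun hfg i _ => hfg i, fun hfg i => ?_⟩
  obtain rfl | hi := eq_or_ne i a
  · have hrest : ∑ j ∈ {i}ᶜ, f j = ∑ j ∈ {i}ᶜ, g j :=
      Finset.sum_congr rfl fun j hj => hfg j (by simpa using hj)
    rw [Fintype.sum_eq_add_sum_compl i f, Fintype.sum_eq_add_sum_compl i g, hrest] at h
    exact add_right_cancel h
  · exact hfg i hi

lemma isTransportPlan_graphCoupling_iff_of_invariant (hμ : ∀ p, 0 ≤ μ p)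
    (hα : ∀ q, ∑ p, μ p * α p q = μ q) (hν : ∀ r, ν r ≠ 0) (hβ : ∀ t, ∑ r, ν r * β r t = ν t) :
    IsTransportPlan α μ β ν (graphCoupling μ π) ↔
      (∀ r, ∑ p with π p = r, μ p = ν r) ∧
        ∀ q r, r ≠ π q → fiberFlow α μ π r q = μ q * (ν r / ν (π q) * β r (π q)) := by
  rw [isTransportPlan_graphCoupling_iff hμ]
  refine and_congr_right' (forall_congr' fun q => forall_eq_iff_forall_ne_of_sum_eq ?_ (π q))
  rw [sum_fiberFlow, hα, ← Finset.mul_sum, sum_reversed_transition (hν _) (hβ _), mul_one]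

theorem stmt_11_general (hμ : ∀ p, 0 ≤ μ p) (hα : ∀ q, ∑ p, μ p * α p q = μ q)
    (hν : ∀ r, ν r ≠ 0) (hβ : ∀ t, ∑ r, ν r * β r t = ν t) :
    ((∃ ω, IsTransportPlan α μ β ν ω ∧ offGraphMass π ω = 0) ↔
      (∀ r, ∑ p with π p = r, μ p = ν r) ∧
        ∀ q r, r ≠ π q → fiberFlow α μ π r q = μ q * (ν r / ν (π q) * β r (π q))) ∧
    ∀ ω, IsTransportPlan α μ β ν ω → offGraphMass π ω = 0 → ω = graphCoupling μ π := by
  have huniq (ω : Fin m → Fin n → ℝ) (hω : IsTransportPlan α μ β ν ω)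
      (hmass : offGraphMass π ω = 0) : ω = graphCoupling μ π :=
    eq_graphCoupling_of_offGraphMass_eq_zero hω.1 hmass
  rw [← isTransportPlan_graphCoupling_iff_of_invariant hμ hα hν hβ]
  exact ⟨⟨fun ⟨ω, hω, hmass⟩ => huniq ω hω hmass ▸ hω,
    fun h => ⟨_, h, offGraphMass_graphCoupling⟩⟩, huniq⟩

end GraphCoupling

section FourPointTwoPoint

/-- The map from four points to two whose graph carries no cost in the 4-point/2-point example. In
the paper's numbering it sends 1 and 3 to 1, and 2 and 4 to 2. -/
def pairing : Fin 4 → Fin 2 := ![0, 1, 0, 1]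

lemma offGraphMass_pairing (ω : Fin 4 → Fin 2 → ℝ) :
    offGraphMass pairing ω = ω 1 0 + ω 3 0 + ω 0 1 + ω 2 1 := by
  simp only [offGraphMass, Finset.sum_filter, Fin.sum_univ_four, Fin.sum_univ_two]
  simp only [pairing, Fin.isValue, Matrix.cons_val_zero, Matrix.cons_val_one, Matrix.cons_val,
    ne_eq, one_ne_zero, zero_ne_one, not_true_eq_false, not_false_eq_true, reduceIte, zero_add,
    add_zero]
  ring

lemma graphCoupling_pairing (μ : Fin 4 → ℝ) :
    graphCoupling μ pairing = ![![μ 0, 0], ![0, μ 1], ![μ 2, 0], ![0, μ 3]] := by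
  ext p r
  fin_cases p <;> fin_cases r <;> simp [graphCoupling, pairing]

lemma forall_ne_pairing_iff {P : Fin 4 → Fin 2 → Prop} :
    (∀ q i, i ≠ pairing q → P q i) ↔ P 0 1 ∧ P 1 0 ∧ P 2 1 ∧ P 3 0 := by
  simp [Fin.forall_fin_succ, pairing]

lemma sum_fiber_pairing_zero {M : Type*} [AddCommMonoid M] (f : Fin 4 → M) :
    ∑ p with pairing p = 0, f p = f 0 + f 2 := by
  have hfiber : ({p | pairing p = 0} : Finset (Fin 4)) = {0, 2} := by decide
  rw [hfiber, Finset.sum_pair (by decide)]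

lemma sum_fiber_pairing_one {M : Type*} [AddCommMonoid M] (f : Fin 4 → M) :
    ∑ p with pairing p = 1, f p = f 1 + f 3 := by
  have hfiber : ({p | pairing p = 1} : Finset (Fin 4)) = {1, 3} := by decide
  rw [hfiber, Finset.sum_pair (by decide)]

variable {r s : ℝ} {ν : Fin 2 → ℝ}

lemma two_point_invariant (hdb : ν 0 * r = ν 1 * s) (t : Fin 2) :
    ∑ i, ν i * (![![1 - r, r], ![s, 1 - s]] : Fin 2 → Fin 2 → ℝ) i t = ν t := by
  rw [Fin.sum_univ_two]
  fin_cases t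
  · change ν 0 * (1 - r) + ν 1 * s = ν 0
    linarith
  · change ν 0 * r + ν 1 * (1 - s) = ν 1
    linarith

lemma fibers_pairing_iff {μ : Fin 4 → ℝ} (hsum : ∑ p, μ p = ν 0 + ν 1) :
    (∀ i, ∑ p with pairing p = i, μ p = ν i) ↔ ν 0 = μ 0 + μ 2 := by
  rw [Fin.sum_univ_four] at hsum
  rw [Fin.forall_fin_two, sum_fiber_pairing_zero, sum_fiber_pairing_one]
  exact ⟨fun ⟨hzero, _⟩ => hzero.symm, fun hzero => ⟨hzero.symm, by linarith⟩⟩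

lemma fiberFlow_pairing_iff (α : Fin 4 → Fin 4 → ℝ) (μ : Fin 4 → ℝ) (hν : ∀ i, ν i ≠ 0)
    (hdb : ν 0 * r = ν 1 * s) :
    (∀ q i, i ≠ pairing q → fiberFlow α μ pairing i q = μ q * (ν i / ν (pairing q) *
        (![![1 - r, r], ![s, 1 - s]] : Fin 2 → Fin 2 → ℝ) i (pairing q))) ↔
      μ 0 * α 0 1 + μ 2 * α 2 1 = μ 1 * s ∧
      μ 0 * α 0 3 + μ 2 * α 2 3 = μ 3 * s ∧
      μ 1 * α 1 0 + μ 3 * α 3 0 = μ 0 * r ∧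
      μ 1 * α 1 2 + μ 3 * α 3 2 = μ 2 * r := by
  have hrev_zero_one : ν 0 / ν 1 * r = s := by
    rw [div_mul_eq_mul_div, hdb, mul_div_cancel_left₀ _ (hν 1)]
  have hrev_one_zero : ν 1 / ν 0 * s = r := by
    rw [div_mul_eq_mul_div, ← hdb, mul_div_cancel_left₀ _ (hν 0)]
  simp only [forall_ne_pairing_iff, fiberFlow, sum_fiber_pairing_zero, sum_fiber_pairing_one]
  change μ 1 * α 1 0 + μ 3 * α 3 0 = μ 0 * (ν 1 / ν 0 * s) ∧
    μ 0 * α 0 1 + μ 2 * α 2 1 = μ 1 * (ν 0 / ν 1 * r) ∧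
    μ 1 * α 1 2 + μ 3 * α 3 2 = μ 2 * (ν 1 / ν 0 * s) ∧
    μ 0 * α 0 3 + μ 2 * α 2 3 = μ 3 * (ν 0 / ν 1 * r) ↔ _
  rw [hrev_zero_one, hrev_one_zero]
  tauto

end FourPointTwoPoint

/-- In the 4-point/2-point example, a zero-cost transport plan from
(4, α, μ) to (2, β, ν) exists iff ν_1 = μ_1 + μ_3 and the four balance equations hold;
moreover the zero-cost transport plan is then unique. -/
theorem stmt_11 (α : Fin 4 → Fin 4 → ℝ) (μ : Fin 4 → ℝ)
    (hA : IsClassicalSystem α μ)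
    (r s : ℝ) (hr0 : 0 ≤ r) (hr1 : r ≤ 1) (hs0 : 0 ≤ s) (hs1 : s ≤ 1)
    (ν : Fin 2 → ℝ) (hν : ∀ i, 0 < ν i) (hνsum : ν 0 + ν 1 = 1)
    (hdb : ν 0 * r = ν 1 * s) :
    ((∃ ω, IsTransportPlan α μ (![![1 - r, r], ![s, 1 - s]]) ν ω ∧
        ω 1 0 + ω 3 0 + ω 0 1 + ω 2 1 = 0) ↔
      (ν 0 = μ 0 + μ 2 ∧
        μ 0 * α 0 1 + μ 2 * α 2 1 = μ 1 * s ∧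
        μ 0 * α 0 3 + μ 2 * α 2 3 = μ 3 * s ∧
        μ 1 * α 1 0 + μ 3 * α 3 0 = μ 0 * r ∧
        μ 1 * α 1 2 + μ 3 * α 3 2 = μ 2 * r)) ∧
    ∀ ω, IsTransportPlan α μ (![![1 - r, r], ![s, 1 - s]]) ν ω →
      ω 1 0 + ω 3 0 + ω 0 1 + ω 2 1 = 0 →
      ω = ![![μ 0, 0], ![0, μ 1], ![μ 2, 0], ![0, μ 3]] := by
  obtain ⟨-, -, hμ, hμsum, hα⟩ := hA
  have hν_ne (i : Fin 2) : ν i ≠ 0 := (hν i).ne'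
  have hgeneral := stmt_11_general (π := pairing) (fun p => (hμ p).le) hα hν_ne
    (two_point_invariant hdb)
  simpa only [offGraphMass_pairing, graphCoupling_pairing,
    fibers_pairing_iff (hμsum.trans hνsum.symm), fiberFlow_pairing_iff α μ hν_ne hdb]
    using hgeneral
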